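/- Eventual completeness of limited belief: let s be a finite set of clauses, α an objective formula, and F a finite set of function terms containing all function terms occurring in s and in α. If s ⊨ α (classical entailment), then s ⊨ˢ B_{|F|} α. -/

import Mathlib

/-! ## Limited belief: basic syntax and semantics (Schwering 2017, quantifier-free). -/

/-- Standard names (a countably infinite supply). -/
abbrev Name := ℕ

/-- Function terms `f(n₁,…,n_j)`: a function symbol applied to standard names. -/
structure FnTerm where
  sym : ℕ
  args : List Name
deriving DecidableEq, Inhabited

/-- Literals `t ≈ n` (pos) and `t ≉ n` (neg). -/
inductive Lit where
  | pos (t : FnTerm) (n : Name)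
  | neg (t : FnTerm) (n : Name)
deriving DecidableEq

instance : Inhabited Lit := ⟨.pos default 0⟩

/-- The left-hand side (function term) of a literal. -/
def Lit.lhs : Lit → FnTerm
  | .pos t _ => t
  | .neg t _ => t

/-- The right-hand side (standard name) of a literal. -/
def Lit.rhs : Lit → Name
  | .pos _ n => n
  | .neg _ n => n

/-- The negation `¬ℓ` of a literal. -/
def Lit.negate : Lit → Lit
  | .pos t n => .neg t n
  | .neg t n => .pos t n

/-- Names occurring in a literal. -/
def Lit.names (ℓ : Lit) : Finset Name := insert ℓ.rhs ℓ.lhs.args.toFinset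

/-- Two literals are complementary iff they are of the form `t ≈ n` and `t ≉ n`,
or of the form `t ≈ n` and `t ≈ n'` for distinct `n, n'`. -/
def Lit.complementary : Lit → Lit → Bool
  | .pos t n, .neg t' n' => t == t' && n == n'
  | .neg t n, .pos t' n' => t == t' && n == n'
  | .pos t n, .pos t' n' => t == t' && n != n'
  | .neg _ _, .neg _ _ => false

/-- A clause is a (finite) set of literals. -/
abbrev Clause := Finset Lit

/-- Unit propagation of clause `c` with literal `ℓ`: remove from `c` all
literals complementary to `ℓ`. -/
def Clause.prop (c : Clause) (ℓ : Lit) : Clause :=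
  c.filter (fun ℓ' => Lit.complementary ℓ' ℓ = false)

/-- `c₁` subsumes `c₂` iff for every `t ≈ n ∈ c₁`, `t ≈ n ∈ c₂` or `t ≉ n' ∈ c₂`
for some `n' ≠ n`, and for every `t ≉ n ∈ c₁`, `t ≉ n ∈ c₂`. -/
def Clause.subsumes (c₁ c₂ : Clause) : Prop :=
  (∀ t n, Lit.pos t n ∈ c₁ → Lit.pos t n ∈ c₂ ∨ ∃ n', n' ≠ n ∧ Lit.neg t n' ∈ c₂) ∧
  (∀ t n, Lit.neg t n ∈ c₁ → Lit.neg t n ∈ c₂)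

/-- `UP s`: the closure of the set of clauses `s` under unit propagation and
subsumption.  `UP s c` means `c ∈ UP(s)`. -/
inductive UP (s : Set Clause) : Clause → Prop
  | mem {c : Clause} : c ∈ s → UP s c
  | unit {c : Clause} {ℓ : Lit} : UP s {ℓ} → UP s c → UP s (c.prop ℓ)
  | sub {c₁ c₂ : Clause} : UP s c₁ → c₁.subsumes c₂ → UP s c₂

/-- Objective formulas: literals (`atom` is `t ≈ n`, `not atom` is `t ≉ n`),
negation and disjunction. -/
inductive Form where
  | atom (t : FnTerm) (n : Name)
  | not (φ : Form)
  | or (φ ψ : Form)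
deriving DecidableEq

/-- `α ∧ β` abbreviates `¬(¬α ∨ ¬β)`. -/
def Form.and (φ ψ : Form) : Form := .not (.or (.not φ) (.not ψ))

/-- `α → β` abbreviates `¬α ∨ β`. -/
def Form.imp (φ ψ : Form) : Form := .or (.not φ) ψ

/-- A formula is (syntactically) a clause iff it is a disjunction of literals. -/
def Form.isClause : Form → Bool
  | .atom _ _ => true
  | .not (.atom _ _) => true
  | .not _ => false
  | .or φ ψ => φ.isClause && ψ.isClause

/-- The set of literals of a clause-formula. -/
def Form.lits : Form → Clause
  | .atom t n => {Lit.pos t n}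
  | .not (.atom t n) => {Lit.neg t n}
  | .not _ => ∅
  | .or φ ψ => φ.lits ∪ ψ.lits

/-- The limited-belief truth relation `s ⊨ˢ α` for objective formulas:
a clause is true iff it is in `UP(s)`; a non-clause disjunction is true iff one
of its disjuncts is; `¬(α ∨ β)` is true iff `¬α` and `¬β` are; `¬¬α` is true
iff `α` is. -/
def sat (s : Set Clause) : Form → Prop
  | .atom t n => UP s {Lit.pos t n}
  | .not (.atom t n) => UP s {Lit.neg t n}
  | .not (.not φ) => sat s φ
  | .not (.or φ ψ) => sat s (.not φ) ∧ sat s (.not ψ)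
  | .or φ ψ => if (Form.or φ ψ).isClause then UP s (Form.or φ ψ).lits
               else sat s φ ∨ sat s ψ

/-- `satB s k α` is `s ⊨ˢ B_k α`: `B₀ α` holds iff `α` does, and `B_{k+1} α`
holds iff for some function term `t`, for all names `n`,
`s ∪ {t ≈ n} ⊨ˢ B_k α`. -/
def satB (s : Set Clause) : ℕ → Form → Prop
  | 0, φ => sat s φ
  | k+1, φ => ∃ t : FnTerm, ∀ n : Name, satB (s ∪ {({Lit.pos t n} : Clause)}) k φ

/-- A world maps function terms to standard names. -/
abbrev World := FnTerm → Name

/-- Classical truth of a literal in a world. -/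
def Lit.holds (w : World) : Lit → Prop
  | .pos t n => w t = n
  | .neg t n => w t ≠ n

/-- Classical truth of a clause in a world. -/
def Clause.holds (w : World) (c : Clause) : Prop := ∃ ℓ ∈ c, ℓ.holds w

/-- Classical truth of an objective formula in a world. -/
def wsat (w : World) : Form → Prop
  | .atom t n => w t = n
  | .not φ => ¬ wsat w φ
  | .or φ ψ => wsat w φ ∨ wsat w ψ

/-- Classical entailment `s ⊨ α`. -/
def entails (s : Set Clause) (φ : Form) : Prop :=
  ∀ w : World, (∀ c ∈ s, c.holds w) → wsat w φ

/-- Classical entailment of a clause (disjunction of its literals). -/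
def entailsClause (s : Set Clause) (c : Clause) : Prop :=
  ∀ w : World, (∀ c' ∈ s, c'.holds w) → c.holds w

/-- Function terms mentioned in a formula. -/
def Form.terms : Form → Finset FnTerm
  | .atom t _ => {t}
  | .not φ => φ.terms
  | .or φ ψ => φ.terms ∪ ψ.terms

/-- Standard names mentioned in a formula. -/
def Form.names : Form → Finset Name
  | .atom t n => insert n t.args.toFinset
  | .not φ => φ.names
  | .or φ ψ => φ.names ∪ ψ.names

/-!
Split on the terms of `F` one after the other: every sequence of choices adds to `s` the values on
`F` of some world `w`, and these values decide every formula over `F` by unit propagation and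
subsumption alone. If `w` satisfies `s`, then `α` is true in `w` and hence derived. Otherwise `w`
falsifies a clause of `s`, which unit propagation reduces to the empty clause, and everything is
derived.
-/

theorem Clause.subsumes_of_subset {c₁ c₂ : Clause} (h : c₁ ⊆ c₂) : c₁.subsumes c₂ :=
  ⟨fun _ _ hpos => Or.inl (h hpos), fun _ _ hneg => h hneg⟩

theorem UP.of_subset {s : Set Clause} {c₁ c₂ : Clause} (hc : UP s c₁) (h : c₁ ⊆ c₂) : UP s c₂ :=
  hc.sub (Clause.subsumes_of_subset h)

theorem sat_of_up_empty {s : Set Clause} (h : UP s ∅) (φ : Form) : sat s φ := by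
  have up_all (c : Clause) : UP s c := h.of_subset c.empty_subset
  fun_induction sat s φ with
  | case1 => exact up_all _
  | case2 => exact up_all _
  | case3 _ ih => exact ih
  | case4 _ _ ihφ ihψ => exact ⟨ihφ, ihψ⟩
  | case5 => exact up_all _
  | case6 _ _ _ ihφ _ => exact Or.inl ihφ

theorem Lit.subsumes_of_holds {w : World} {ℓ : Lit} (h : ℓ.holds w) :
    Clause.subsumes {Lit.pos ℓ.lhs (w ℓ.lhs)} {ℓ} := by
  cases ℓ with
  | pos t n => exact Clause.subsumes_of_subset (by simp [Lit.lhs, show w t = n from h])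
  | neg t n => simpa [Clause.subsumes, Lit.lhs] using Ne.symm h

theorem Lit.complementary_of_not_holds {w : World} {ℓ : Lit} (h : ¬ ℓ.holds w) :
    ℓ.complementary (.pos ℓ.lhs (w ℓ.lhs)) = true := by
  cases ℓ with
  | pos t n => simpa [Lit.complementary, Lit.lhs] using Ne.symm h
  | neg t n => simpa [Lit.complementary, Lit.lhs] using (not_not.mp h).symm

theorem Clause.prop_ssubset {c : Clause} {ℓ ℓ' : Lit} (hℓ : ℓ ∈ c)
    (h : ℓ.complementary ℓ' = true) : c.prop ℓ' ⊂ c :=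
  Finset.filter_ssubset.mpr ⟨ℓ, hℓ, by simp [h]⟩

theorem Form.lhs_mem_terms_of_mem_lits {φ : Form} {ℓ : Lit} (h : ℓ ∈ φ.lits) :
    ℓ.lhs ∈ φ.terms := by
  fun_induction Form.lits φ <;> grind [Form.terms, Lit.lhs]

theorem Form.holds_lits_iff {φ : Form} (hφ : φ.isClause = true) (w : World) :
    φ.lits.holds w ↔ wsat w φ := by
  fun_induction Form.lits φ <;>
    simp_all [Form.isClause, Clause.holds, Lit.holds, wsat, or_and_right, exists_or]

/-- `Determines s w F` says that unit propagation and subsumption derive from `s` the value that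
the world `w` gives to each term of `F`. -/
def Determines (s : Set Clause) (w : World) (F : Set FnTerm) : Prop :=
  ∀ t ∈ F, UP s {Lit.pos t (w t)}

namespace Determines

variable {s : Set Clause} {w : World} {F : Set FnTerm}

theorem up_lit (hs : Determines s w F) {ℓ : Lit} (hF : ℓ.lhs ∈ F) (hℓ : ℓ.holds w) : UP s {ℓ} :=
  (hs _ hF).sub (Lit.subsumes_of_holds hℓ)

theorem up_clause (hs : Determines s w F) {c : Clause} (hF : ∀ ℓ ∈ c, ℓ.lhs ∈ F)
    (hc : c.holds w) : UP s c := by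
  obtain ⟨ℓ, hℓc, hℓ⟩ := hc
  exact (hs.up_lit (hF ℓ hℓc) hℓ).of_subset (Finset.singleton_subset_iff.mpr hℓc)

theorem up_empty (hs : Determines s w F) {c : Clause} (hF : ∀ ℓ ∈ c, ℓ.lhs ∈ F)
    (hc : UP s c) (hw : ¬ c.holds w) : UP s ∅ := by
  induction c using Finset.strongInduction with
  | H c ih =>
    obtain rfl | ⟨ℓ, hℓc⟩ := c.eq_empty_or_nonempty
    · exact hc
    · have hℓ : ¬ ℓ.holds w := fun hℓ => hw ⟨ℓ, hℓc, hℓ⟩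
      have hlt := Clause.prop_ssubset hℓc (Lit.complementary_of_not_holds hℓ)
      exact ih _ hlt (fun ℓ' hℓ' => hF ℓ' (hlt.subset hℓ')) (.unit (hs _ (hF ℓ hℓc)) hc)
        fun ⟨ℓ', hℓ', hholds⟩ => hw ⟨ℓ', hlt.subset hℓ', hholds⟩

theorem sat_of_wsat (hs : Determines s w F) {φ : Form} (hF : ∀ t ∈ φ.terms, t ∈ F)
    (hφ : wsat w φ) : sat s φ := by
  fun_induction sat s φ with
  | case1 t n => exact hs.up_lit (ℓ := .pos t n) (hF t (by simp [Form.terms])) hφ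
  | case2 t n => exact hs.up_lit (ℓ := .neg t n) (hF t (by simp [Form.terms])) hφ
  | case3 φ ih => exact ih hF (not_not.mp hφ)
  | case4 φ ψ ihφ ihψ =>
    obtain ⟨hnφ, hnψ⟩ := not_or.mp hφ
    exact ⟨ihφ (fun t ht => hF t (Finset.mem_union_left _ ht)) hnφ,
      ihψ (fun t ht => hF t (Finset.mem_union_right _ ht)) hnψ⟩
  | case5 φ ψ hclause =>
    exact hs.up_clause (fun ℓ hℓ => hF _ (Form.lhs_mem_terms_of_mem_lits hℓ))
      ((Form.holds_lits_iff hclause w).mpr hφ)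
  | case6 φ ψ _ ihφ ihψ =>
    exact hφ.imp (ihφ fun t ht => hF t (Finset.mem_union_left _ ht))
      (ihψ fun t ht => hF t (Finset.mem_union_right _ ht))

theorem sat_of_entails (hs : Determines s w F) {s₀ : Set Clause} (hup : ∀ c ∈ s₀, UP s c)
    {φ : Form} (hs₀F : ∀ c ∈ s₀, ∀ ℓ ∈ c, ℓ.lhs ∈ F) (hφF : ∀ t ∈ φ.terms, t ∈ F)
    (h : entails s₀ φ) : sat s φ := by
  by_cases hw : ∀ c ∈ s₀, c.holds w
  · exact hs.sat_of_wsat hφF (h w hw)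
  · push Not at hw
    obtain ⟨c, hcs₀, hcw⟩ := hw
    exact sat_of_up_empty (hs.up_empty (hs₀F c hcs₀) (hup c hcs₀) hcw) φ

end Determines

/-- The unit clauses `t ≈ w t` for `t ∈ F`: the restriction of the world `w` to `F`, written as a
set of clauses. -/
def World.diagram (w : World) (F : Set FnTerm) : Set Clause :=
  (fun t => {Lit.pos t (w t)}) '' F

theorem World.determines_union_diagram (w : World) (s : Set Clause) (F : Set FnTerm) :
    Determines (s ∪ w.diagram F) w F :=
  fun _ ht => .mem (Or.inr (Set.mem_image_of_mem _ ht))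

theorem World.diagram_update_insert (w : World) {t : FnTerm} {F : Set FnTerm} (ht : t ∉ F)
    (n : Name) :
    World.diagram (Function.update w t n) (insert t F) = {{Lit.pos t n}} ∪ w.diagram F := by
  have hagree : ∀ t' ∈ F, Function.update w t n t' = w t' := fun t' ht' =>
    Function.update_of_ne (ne_of_mem_of_not_mem ht' ht) _ _
  rw [World.diagram, Set.image_insert_eq, Function.update_self, Set.insert_eq, World.diagram]
  congr 1
  exact Set.image_congr fun t' ht' => by rw [hagree t' ht']

theorem satB_card_of_forall_sat_union_diagram {s : Set Clause} {φ : Form} (F : Finset FnTerm)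
    (h : ∀ w : World, sat (s ∪ w.diagram F) φ) : satB s F.card φ := by
  induction F using Finset.induction_on generalizing s with
  | empty => simpa [satB, World.diagram] using h default
  | insert t F ht ih =>
    rw [Finset.card_insert_of_notMem ht]
    refine ⟨t, fun n => ih fun w => ?_⟩
    rw [Set.union_assoc, ← World.diagram_update_insert w (Finset.mem_coe.not.mpr ht),
      ← Finset.coe_insert]
    exact h _

theorem limited_belief_eventually_complete_general (s : Set Clause) (α : Form)
    (F : Finset FnTerm) (hsF : ∀ c ∈ s, ∀ ℓ ∈ c, Lit.lhs ℓ ∈ F) (hαF : α.terms ⊆ F)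
    (h : entails s α) : satB s F.card α := by
  refine satB_card_of_forall_sat_union_diagram F fun w => ?_
  have hdet : Determines (s ∪ w.diagram F) w F := w.determines_union_diagram s F
  exact hdet.sat_of_entails (fun _ hc => .mem (Or.inl hc)) hsF hαF h

/-- **Eventual completeness of limited belief**: if `s` is finite, `F` contains
all function terms occurring in `s` and `α`, and `s ⊨ α` classically, then
`s ⊨ˢ B_{|F|} α`. -/
theorem limited_belief_eventually_complete (s : Set Clause) (hfin : s.Finite)
    (α : Form) (F : Finset FnTerm)
    (hsF : ∀ c ∈ s, ∀ ℓ ∈ c, Lit.lhs ℓ ∈ F) (hαF : α.terms ⊆ F)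
    (h : entails s α) : satB s F.card α :=
  limited_belief_eventually_complete_general s α F hsF hαF h
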